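/- The stable sets of a collective argumentation theory coincide with its maximal negatively admissible sets: Γ is stable if and only if Γ is negatively admissible and no set properly containing Γ is negatively admissible. -/

import Mathlib

/-- Monotonicity: the defining condition of a collective argumentation theory. -/
def Mono {A : Type*} (att : Set A → Set A → Prop) : Prop :=
  ∀ Γ Δ Γ' Δ' : Set A, att Γ Δ → att (Γ ∪ Γ') (Δ ∪ Δ')

/-- Γ is stable if Γ is a maximal element of ⟨Γ⟩ = {Δ | ¬ att Γ Δ}. -/
def Stable {A : Type*} (att : Set A → Set A → Prop) (Γ : Set A) : Prop :=
  ¬ att Γ Γ ∧ ∀ Δ : Set A, Γ ⊂ Δ → att Γ Δ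

/-- Γ negatively attacks Δ (Γ ↝⁻ Δ) if Γ ↝ Γ ∪ Δ. -/
def NegAtt {A : Type*} (att : Set A → Set A → Prop) (Γ Δ : Set A) : Prop :=
  att Γ (Γ ∪ Δ)

/-- Γ is conflict-free if it does not attack itself. -/
def ConflictFree {A : Type*} (att : Set A → Set A → Prop) (Γ : Set A) : Prop :=
  ¬ att Γ Γ

/-- Γ is negatively admissible if it is conflict-free and it negatively
counterattacks any set that negatively attacks it. -/
def NegAdmissible {A : Type*} (att : Set A → Set A → Prop) (Γ : Set A) : Prop :=
  ConflictFree att Γ ∧ ∀ Δ : Set A, NegAtt att Δ Γ → NegAtt att Γ Δ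

/-!
A stable set negatively attacks everything not contained in it, so it counterattacks, and its proper
supersets conflict with themselves. Conversely, counterattacking passes to supersets, since an
attacker `Φ` of `Δ ⊇ Γ` yields the attacker `Φ ∪ Δ` of `Γ`. Hence a superset of a negatively
admissible set `Γ` that `Γ` does not attack is again negatively admissible, and maximality of `Γ`
leaves no proper superset unattacked.
-/

/-- `Γ` negatively attacks every set that negatively attacks it. This is the second half of negative
admissibility, kept apart from conflict-freeness because it alone passes to supersets. -/
def NegCounterattacks {A : Type*} (att : Set A → Set A → Prop) (Γ : Set A) : Prop :=
  ∀ Δ : Set A, NegAtt att Δ Γ → NegAtt att Γ Δ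

section

variable {A : Type*} {att : Set A → Set A → Prop} {Γ Γ' Δ Δ' : Set A}

theorem Mono.att_of_subset (hmono : Mono att) (hΓ : Γ ⊆ Γ') (hΔ : Δ ⊆ Δ') (h : att Γ Δ) :
    att Γ' Δ' := by
  simpa only [Set.union_eq_right.mpr hΓ, Set.union_eq_right.mpr hΔ] using hmono Γ Δ Γ' Δ' h

theorem Mono.negAtt_of_subset (hmono : Mono att) (hΓ : Γ ⊆ Γ') (hΔ : Δ ⊆ Δ')
    (h : NegAtt att Γ Δ) : NegAtt att Γ' Δ' :=
  hmono.att_of_subset hΓ (Set.union_subset_union hΓ hΔ) h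

theorem negAtt_iff_att_of_subset (h : Γ ⊆ Δ) : NegAtt att Γ Δ ↔ att Γ Δ := by
  rw [NegAtt, Set.union_eq_right.mpr h]

theorem Stable.negAtt_of_not_subset (hΓ : Stable att Γ) (h : ¬ Δ ⊆ Γ) : NegAtt att Γ Δ :=
  hΓ.2 (Γ ∪ Δ) (Set.ssubset_union_left_iff.mpr h)

theorem Stable.negCounterattacks (hmono : Mono att) (hΓ : Stable att Γ) :
    NegCounterattacks att Γ := by
  intro Δ hΔ
  have not_subset : ¬ Δ ⊆ Γ := by
    intro hsub
    have self_attack : NegAtt att Γ Γ := hmono.negAtt_of_subset hsub subset_rfl hΔ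
    exact hΓ.1 ((negAtt_iff_att_of_subset subset_rfl).mp self_attack)
  exact hΓ.negAtt_of_not_subset not_subset

theorem Stable.negAdmissible (hmono : Mono att) (hΓ : Stable att Γ) : NegAdmissible att Γ :=
  ⟨hΓ.1, hΓ.negCounterattacks hmono⟩

theorem Stable.not_conflictFree_of_ssubset (hmono : Mono att) (hΓ : Stable att Γ) (h : Γ ⊂ Δ) :
    ¬ ConflictFree att Δ :=
  not_not_intro (hmono.att_of_subset h.subset subset_rfl (hΓ.2 Δ h))

theorem NegCounterattacks.of_subset (hmono : Mono att) (hΓ : NegCounterattacks att Γ)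
    (h : Γ ⊆ Δ) : NegCounterattacks att Δ := by
  intro Φ hΦ
  have attacker : NegAtt att (Φ ∪ Δ) Γ :=
    hmono.att_of_subset Set.subset_union_left Set.subset_union_left hΦ
  have counterattack : NegAtt att Δ (Φ ∪ Δ) :=
    hmono.negAtt_of_subset h subset_rfl (hΓ (Φ ∪ Δ) attacker)
  rwa [negAtt_iff_att_of_subset Set.subset_union_right, Set.union_comm] at counterattack

theorem NegCounterattacks.conflictFree_of_not_att (hmono : Mono att)
    (hΓ : NegCounterattacks att Γ) (h : Γ ⊆ Δ) (hatt : ¬ att Γ Δ) : ConflictFree att Δ := by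
  intro self_attack
  have attacker : NegAtt att Δ Γ :=
    hmono.att_of_subset subset_rfl Set.subset_union_left self_attack
  exact hatt ((negAtt_iff_att_of_subset h).mp (hΓ Δ attacker))

theorem NegCounterattacks.negAdmissible_of_not_att (hmono : Mono att)
    (hΓ : NegCounterattacks att Γ) (h : Γ ⊆ Δ) (hatt : ¬ att Γ Δ) : NegAdmissible att Δ :=
  ⟨hΓ.conflictFree_of_not_att hmono h hatt, hΓ.of_subset hmono h⟩

end

theorem stable_iff_maximal_negAdmissible {A : Type*} (att : Set A → Set A → Prop)
    (hmono : Mono att) (Γ : Set A) :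
    Stable att Γ ↔
      NegAdmissible att Γ ∧ ∀ Δ : Set A, Γ ⊂ Δ → ¬ NegAdmissible att Δ := by
  constructor
  · intro hΓ
    exact ⟨hΓ.negAdmissible hmono, fun Δ hΔ hadm =>
      hΓ.not_conflictFree_of_ssubset hmono hΔ hadm.1⟩
  · rintro ⟨⟨conflictFree, counterattacks⟩, maximal⟩
    refine ⟨conflictFree, fun Δ hΔ => ?_⟩
    by_contra hatt
    exact maximal Δ hΔ
      (NegCounterattacks.negAdmissible_of_not_att hmono counterattacks hΔ.subset hatt)
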